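/- Let k ≥ 5. For any two distinct nonadjacent vertices u, v of H_k(P_3) with u, v ∈ {a_1, a_3} ∪ C and {u, v} ≠ {a_1, a_3}, the graph H_k(P_3) + uv has a Hamilton cycle (a cycle through all 2k+1 vertices). Moreover, for every z ∈ C there is a path on 2k vertices in H_k(P_3) starting at a_2 and ending at z. -/

import Mathlib

open SimpleGraph

/-- The number of edges of a simple graph. -/
noncomputable def edgeCount {V : Type*} (G : SimpleGraph V) : ℕ := G.edgeSet.ncard

/-- `H` occurs as a subgraph of `G` (there is an injective map preserving adjacency). -/
def ContainsCopy {V W : Type*} (G : SimpleGraph V) (H : SimpleGraph W) : Prop :=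
  ∃ f : W → V, Function.Injective f ∧ ∀ a b : W, H.Adj a b → G.Adj (f a) (f b)

/-- The Turán number `ex(n, H)`: the maximum number of edges of an `H`-free
simple graph on `n` vertices. -/
noncomputable def exNum (n : ℕ) {W : Type*} (H : SimpleGraph W) : ℕ :=
  sSup {m | ∃ G : SimpleGraph (Fin n), ¬ ContainsCopy G H ∧ edgeCount G = m}

/-- `h(n,k,a) = C(k-a,2) + a(n-k+a)`. -/
def hFun (n k a : ℕ) : ℕ := (k - a).choose 2 + a * (n - k + a)

/-- `c(n,m,ℓ) = C(m-1,2) + t·C(ℓ-1,2) + C(r,2)` where `n = (m-1) + t(ℓ-1) + r`,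
`0 ≤ r < ℓ-1`. -/
def cFun (n m l : ℕ) : ℕ :=
  (m - 1).choose 2 + ((n - (m - 1)) / (l - 1)) * ((l - 1).choose 2)
    + ((n - (m - 1)) % (l - 1)).choose 2

/-- A graph is 2-connected if it has at least 3 vertices and removing any
single vertex leaves a connected graph. -/
def TwoConnected {V : Type*} [Fintype V] (G : SimpleGraph V) : Prop :=
  3 ≤ Fintype.card V ∧ ∀ v : V, (G.induce ({v}ᶜ : Set V)).Connected

/-- The circumference of a graph: the length of a longest cycle
(`0` if there is no cycle). -/
noncomputable def circumference {V : Type*} (G : SimpleGraph V) : ℕ :=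
  sSup {m | ∃ (v : V) (c : G.Walk v v), c.IsCycle ∧ c.length = m}

/-- The number of neighbours (in `G`) of `x` lying on the walk `p`. -/
noncomputable def degOn {V : Type*} (G : SimpleGraph V) {a b : V} (p : G.Walk a b) (x : V) : ℕ :=
  {v | v ∈ p.support ∧ G.Adj x v}.ncard

/-- The graph obtained from `G` by adding the edge `uv`. -/
def addEdge {V : Type*} (G : SimpleGraph V) (u v : V) : SimpleGraph V :=
  G ⊔ SimpleGraph.fromEdgeSet {s(u, v)}

/-- The minimum degree of a graph (with classical decidability). -/
noncomputable def minDeg {V : Type*} [Fintype V] (G : SimpleGraph V) : ℕ :=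
  @SimpleGraph.minDegree _ G _ (Classical.decRel _)
open SimpleGraph

/-- Membership (as 0-indexed natural) in the set `C` of `H_k(s)`:
`C = {x_{s+1}, x_{s+3}, …, x_{2k-s+1}}` (1-indexed). -/
def inC_HkS (k s i : ℕ) : Prop := s ≤ i ∧ i ≤ 2 * k - s ∧ (i - s) % 2 = 0

/-- Membership in the set `D` of `H_k(s)`: `D = {x_{s+2}, …, x_{2k-s}}` (1-indexed). -/
def inD_HkS (k s i : ℕ) : Prop := s ≤ i ∧ i ≤ 2 * k - s ∧ (i - s) % 2 = 1

/-- The graph `H_k(s)`: the path `x_1 … x_{2k+1}` (here 0-indexed on `Fin (2k+1)`),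
plus all edges inside `A = {x_1,…,x_s}`, all edges inside `B = {x_{2k-s+2},…,x_{2k+1}}`,
and all edges between `A ∪ B` and `C = {x_{s+1}, x_{s+3}, …, x_{2k-s+1}}`. -/
def HkS (k s : ℕ) : SimpleGraph (Fin (2 * k + 1)) :=
  SimpleGraph.fromRel (fun x y =>
    ((y : ℕ) = (x : ℕ) + 1) ∨
    ((x : ℕ) < s ∧ (y : ℕ) < s) ∨
    (2 * k - s + 1 ≤ (x : ℕ) ∧ 2 * k - s + 1 ≤ (y : ℕ)) ∨
    (((x : ℕ) < s ∨ 2 * k - s + 1 ≤ (x : ℕ)) ∧ inC_HkS k s (y : ℕ)))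

/-- Membership in the part `C` (of size `k-1`) of `H_k(M_2)` (0-indexed):
`C = {x_3, x_5, …, x_{2k-1}}` (1-indexed). -/
def inC_HkM2 (k i : ℕ) : Prop := 2 ≤ i ∧ i ≤ 2 * k - 2 ∧ i % 2 = 0

/-- Membership in `D` of `H_k(M_2)` (0-indexed): `D = {x_4, x_6, …, x_{2k-2}}` (1-indexed). -/
def inD_HkM2 (k i : ℕ) : Prop := 3 ≤ i ∧ i ≤ 2 * k - 3 ∧ i % 2 = 1

/-- The graph `H_k(M_2)`: the complete bipartite graph with parts
`C = {x_3,x_5,…,x_{2k-1}}` (size `k-1`) and `A ∪ B ∪ D` (size `k+2`), where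
`A = {x_1,x_2}`, `B = {x_{2k},x_{2k+1}}`, `D = {x_4,…,x_{2k-2}}`, together with the
matching edges `x_1x_2` and `x_{2k}x_{2k+1}` (here 0-indexed on `Fin (2k+1)`). -/
def HkM2 (k : ℕ) : SimpleGraph (Fin (2 * k + 1)) :=
  SimpleGraph.fromRel (fun x y =>
    ((x : ℕ) = 0 ∧ (y : ℕ) = 1) ∨
    ((x : ℕ) = 2 * k - 1 ∧ (y : ℕ) = 2 * k) ∨
    (inC_HkM2 k (x : ℕ) ∧ ¬ inC_HkM2 k (y : ℕ)))

/-- Membership in the part `B = {b_1, …, b_{k-1}}` of `H_k(P_3)`; on `Fin (2k+1)` we take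
`a_1 = 0, a_2 = 1, a_3 = 2`, `B = {3, …, k+1}`, `C = {k+2, …, 2k}`. -/
def inB_HkP3 (k i : ℕ) : Prop := 3 ≤ i ∧ i ≤ k + 1

/-- Membership in the set `C = {c_1, …, c_{k-1}}` of `H_k(P_3)`. -/
def inC_HkP3 (k i : ℕ) : Prop := k + 2 ≤ i ∧ i ≤ 2 * k

/-- The graph `H_k(P_3)`: the complete bipartite graph `K_{k-1,k+2}` with parts
`B = {b_1,…,b_{k-1}}` and `A ∪ C` where `A = {a_1,a_2,a_3}`, `C = {c_1,…,c_{k-1}}`,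
plus the edges `a_1a_2` and `a_2a_3`. Here `a_1 = 0, a_2 = 1, a_3 = 2`,
`B = {3,…,k+1}`, `C = {k+2,…,2k}` on `Fin (2k+1)`. -/
def HkP3 (k : ℕ) : SimpleGraph (Fin (2 * k + 1)) :=
  SimpleGraph.fromRel (fun x y =>
    ((x : ℕ) = 0 ∧ (y : ℕ) = 1) ∨
    ((x : ℕ) = 1 ∧ (y : ℕ) = 2) ∨
    (inB_HkP3 k (x : ℕ) ∧ ¬ inB_HkP3 k (y : ℕ)))

/-- The graph `F_k(t)`: the path `x_1 … x_{2k+t}` (0-indexed on `Fin (2k+t)`), plus all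
edges inside `A = {x_1,…,x_k}`, all edges inside `B = {x_{k+t+1},…,x_{2k+t}}`, all edges
between `x_k` and `B`, and all edges between `x_{k+t+1}` and `A`. -/
def FkT (k t : ℕ) : SimpleGraph (Fin (2 * k + t)) :=
  SimpleGraph.fromRel (fun x y =>
    ((y : ℕ) = (x : ℕ) + 1) ∨
    ((x : ℕ) < k ∧ (y : ℕ) < k) ∨
    (k + t ≤ (x : ℕ) ∧ k + t ≤ (y : ℕ)) ∨
    ((x : ℕ) = k - 1 ∧ k + t ≤ (y : ℕ)) ∨
    ((x : ℕ) = k + t ∧ (y : ℕ) < k))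

/-- The graph `H(n,k,a)`: vertices `{0,…,k-2a-1} = A`, `{k-2a,…,k-a-1} = B`,
`{k-a,…,n-1} = C`; all edges inside `A ∪ B` and all edges between `B` and `C`. -/
def Hgraph (n k a : ℕ) : SimpleGraph (Fin n) :=
  SimpleGraph.fromRel (fun x y =>
    ((x : ℕ) < k - a ∧ (y : ℕ) < k - a) ∨
    (k - 2 * a ≤ (x : ℕ) ∧ (x : ℕ) < k - a ∧ k - a ≤ (y : ℕ)))

/-- The graph `Z(n,k,t)` (for `n = (k-t-2) + ℓ(t-1) + 2`): two universal mutually adjacent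
vertices `0, 1`, a clique `K_{k-t-2}` on `{2,…,k-t-1}`, and consecutive blocks of size
`t-1` on the remaining vertices, each forming a clique `K_{t-1}`. -/
def Zgraph (n k t : ℕ) : SimpleGraph (Fin n) :=
  SimpleGraph.fromRel (fun x y =>
    ((x : ℕ) < 2) ∨ ((y : ℕ) < 2) ∨
    (2 ≤ (x : ℕ) ∧ (x : ℕ) < k - t ∧ 2 ≤ (y : ℕ) ∧ (y : ℕ) < k - t) ∨
    (k - t ≤ (x : ℕ) ∧ k - t ≤ (y : ℕ) ∧
      ((x : ℕ) - (k - t)) / (t - 1) = ((y : ℕ) - (k - t)) / (t - 1)))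

theorem addEdge_comm {V : Type*} (G : SimpleGraph V) (u v : V) :
    addEdge G u v = addEdge G v u := by
  rw [addEdge, addEdge, Sym2.eq_swap]

theorem le_addEdge {V : Type*} (G : SimpleGraph V) (u v : V) : G ≤ addEdge G u v :=
  le_sup_left

theorem addEdge_adj_self {V : Type*} (G : SimpleGraph V) {u v : V} (h : u ≠ v) :
    (addEdge G u v).Adj u v := by
  simp [addEdge, h]

/-- If every vertex of `S` is adjacent to `x`, to `y` and to every vertex of `T`, and
`|S| = |T| + 1`, there is a path from `x` to `y` alternating between the two sides and using
only vertices of `{x, y} ∪ S ∪ T`, all of them by the length. -/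
theorem exists_alternating_path {V : Type*} [DecidableEq V] (G : SimpleGraph V) (y : V)
    (T : Finset V) : ∀ (x : V) (S : Finset V), S.card = T.card + 1 → x ≠ y → x ∉ T → y ∉ T →
      (∀ b ∈ S, G.Adj x b) → (∀ b ∈ S, G.Adj b y) → (∀ b ∈ S, ∀ c ∈ T, G.Adj b c) →
      ∃ p : G.Walk x y, p.IsPath ∧ p.length = 2 * S.card ∧
        ∀ z ∈ p.support, z = x ∨ z = y ∨ z ∈ S ∨ z ∈ T := by
  induction T using Finset.induction_on with
  | empty =>
    intro x S hS hxy _ _ hx hy _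
    obtain ⟨b, rfl⟩ := Finset.card_eq_one.mp (by simpa using hS)
    have hxb := hx b (by simp)
    have hby := hy b (by simp)
    refine ⟨.cons hxb (.cons hby .nil), ?_, by simp, ?_⟩
    · simp [Walk.cons_isPath_iff, hby.ne, hxb.ne, hxy]
    · intro z hz
      simp at hz ⊢
      tauto
  | insert c T hc ih =>
    intro x S hS hxy hxT hyT hx hy hST
    rw [Finset.card_insert_of_notMem hc] at hS
    obtain ⟨b, hb⟩ : S.Nonempty := Finset.card_pos.mp (by omega)
    have hcard := Finset.card_erase_of_mem hb
    simp only [Finset.mem_insert, not_or] at hxT hyT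
    obtain ⟨p, hp, hlen, hsup⟩ := ih c (S.erase b) (by omega) (Ne.symm hyT.1) hc hyT.2
      (fun b' hb' => (hST b' (Finset.mem_of_mem_erase hb') c (by simp)).symm)
      (fun b' hb' => hy b' (Finset.mem_of_mem_erase hb'))
      (fun b' hb' c' hc' => hST b' (Finset.mem_of_mem_erase hb') c' (by simp [hc']))
    have hbc : G.Adj b c := hST b hb c (by simp)
    refine ⟨.cons (hx b hb) (.cons hbc p), ?_, ?_, ?_⟩
    · rw [Walk.cons_isPath_iff, Walk.cons_isPath_iff, Walk.support_cons, List.mem_cons, not_or]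
      refine ⟨⟨hp, fun hbp => ?_⟩, (hx b hb).ne, fun hxp => ?_⟩
      · rcases hsup b hbp with h | h | h | h
        · exact hbc.ne h
        · exact (hy b hb).ne h
        · simp at h
        · exact (hST b hb b (by simp [h])).ne rfl
      · rcases hsup x hxp with h | h | h | h
        · exact hxT.1 h
        · exact hxy h
        · exact (hx x (Finset.mem_of_mem_erase h)).ne rfl
        · exact hxT.2 h
    · simp only [Walk.length_cons]
      omega
    · intro z hz
      simp only [Walk.support_cons, List.mem_cons] at hz
      rcases hz with rfl | rfl | hz
      · simp
      · simp [hb]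
      · have := hsup z hz
        simp only [Finset.mem_erase, Finset.mem_insert] at this ⊢
        tauto

/-- Closing up a Hamilton path whose end-vertices are adjacent. -/
theorem exists_isHamiltonianCycle_of_isPath {V : Type*} [Fintype V] [DecidableEq V]
    {G : SimpleGraph V} {x y : V} (p : G.Walk x y) (hp : p.IsPath) (h : G.Adj y x)
    (hlen : p.length + 1 = Fintype.card V) (hV : 3 ≤ Fintype.card V) :
    ∃ (w : V) (c : G.Walk w w), c.IsHamiltonianCycle := by
  refine ⟨y, .cons h p, ?_⟩
  rw [Walk.isHamiltonianCycle_iff_isCycle_and_length_eq, Walk.cons_isCycle_iff]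
  refine ⟨⟨hp, fun hmem => ?_⟩, by simpa using hlen⟩
  have := hp.length_eq_one_of_mem_edges (Sym2.eq_swap ▸ hmem)
  omega

theorem HkP3_adj_iff (k : ℕ) (x y : Fin (2 * k + 1)) :
    (HkP3 k).Adj x y ↔
      ((x : ℕ) = 0 ∧ (y : ℕ) = 1) ∨ ((x : ℕ) = 1 ∧ (y : ℕ) = 0) ∨
      ((x : ℕ) = 1 ∧ (y : ℕ) = 2) ∨ ((x : ℕ) = 2 ∧ (y : ℕ) = 1) ∨
      (inB_HkP3 k x ∧ ¬ inB_HkP3 k y) ∨ (inB_HkP3 k y ∧ ¬ inB_HkP3 k x) := by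
  simp only [HkP3, SimpleGraph.fromRel_adj, ne_eq, Fin.ext_iff, inB_HkP3]
  omega

/-- In `H_k(P_3)`, two vertices `x, y` outside `B` are joined by a path through given sets
`S ⊆ B` and `T ⊆ C` with `|S| = |T| + 1`. -/
theorem HkP3_exists_path {k : ℕ} {x y : Fin (2 * k + 1)} {S T : Finset (Fin (2 * k + 1))}
    (hx : ¬ inB_HkP3 k x) (hy : ¬ inB_HkP3 k y) (hxy : x ≠ y) (hxT : x ∉ T) (hyT : y ∉ T)
    (hS : ∀ b ∈ S, inB_HkP3 k b) (hT : ∀ c ∈ T, inC_HkP3 k c) (hcard : S.card = T.card + 1) :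
    ∃ p : (HkP3 k).Walk x y, p.IsPath ∧ p.length = 2 * S.card ∧
      ∀ z ∈ p.support, z = x ∨ z = y ∨ z ∈ S ∨ z ∈ T := by
  refine exists_alternating_path (HkP3 k) y T x S hcard hxy hxT hyT
    (fun b hb => ?_) (fun b hb => ?_) (fun b hb c hc => ?_)
  · simp [HkP3_adj_iff, hS b hb, hx]
  · simp [HkP3_adj_iff, hS b hb, hy]
  · have h : ¬ inB_HkP3 k c := by
      have := hT c hc
      simp only [inB_HkP3, inC_HkP3] at this ⊢
      omega
    simp [HkP3_adj_iff, hS b hb, h]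

theorem HkP3_exists_partB (k : ℕ) (hk : 2 ≤ k) :
    ∃ S : Finset (Fin (2 * k + 1)), S.card = k - 1 ∧ ∀ x, x ∈ S ↔ inB_HkP3 k x :=
  ⟨Finset.Icc ⟨3, by omega⟩ ⟨k + 1, by omega⟩, by simp,
    fun x => by simp [inB_HkP3, Fin.le_def]⟩

theorem HkP3_exists_partC (k : ℕ) (hk : 2 ≤ k) :
    ∃ T : Finset (Fin (2 * k + 1)), T.card = k - 1 ∧ ∀ x, x ∈ T ↔ inC_HkP3 k x :=
  ⟨Finset.Icc ⟨k + 2, by omega⟩ ⟨2 * k, by omega⟩, by simp; omega,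
    fun x => by simp [inC_HkP3, Fin.le_def]⟩

/-- A path from `x` to `z ∈ C` through all of `B ∪ C`, for `x` outside `B ∪ C`. -/
theorem HkP3_exists_path_through_BC {k : ℕ} (hk : 2 ≤ k) {x z : Fin (2 * k + 1)}
    (hx : (x : ℕ) ≤ 2) (hz : inC_HkP3 k z) :
    ∃ p : (HkP3 k).Walk x z, p.IsPath ∧ p.length = 2 * (k - 1) ∧
      ∀ w ∈ p.support, w = x ∨ 3 ≤ (w : ℕ) := by
  obtain ⟨S, hScard, hS⟩ := HkP3_exists_partB k hk
  obtain ⟨T, hTcard, hT⟩ := HkP3_exists_partC k hk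
  have hcard := Finset.card_erase_of_mem ((hT z).mpr hz)
  have hxT : x ∉ T.erase z := fun h => by
    have := (hT x).mp (Finset.mem_of_mem_erase h)
    simp only [inC_HkP3] at this
    omega
  obtain ⟨p, hp, hlen, hsup⟩ := HkP3_exists_path (x := x) (y := z) (S := S) (T := T.erase z)
    (by simp only [inB_HkP3]; omega) (by simp only [inB_HkP3, inC_HkP3] at *; omega)
    (by rintro rfl; simp only [inC_HkP3] at hz; omega) hxT (by simp)
    (fun b => (hS b).mp) (fun c hc => (hT c).mp (Finset.mem_of_mem_erase hc)) (by
      simp only [inC_HkP3] at hz; omega)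
  refine ⟨p, hp, by omega, fun w hw => ?_⟩
  rcases hsup w hw with h | rfl | h | h
  · exact .inl h
  · simp only [inC_HkP3] at hz; omega
  · have := (hS w).mp h
    simp only [inB_HkP3] at this; omega
  · have := (hT w).mp (Finset.mem_of_mem_erase h)
    simp only [inC_HkP3] at this; omega

/-- `H_k(P_3) + uv` is Hamiltonian for `u` an end of the path `a_1 a_2 a_3` and `v ∈ C`. -/
theorem HkP3_add_edge_end_C {k : ℕ} (hk : 2 ≤ k) {u v : Fin (2 * k + 1)}
    (hu : (u : ℕ) = 0 ∨ (u : ℕ) = 2) (hv : inC_HkP3 k v) :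
    ∃ (w : Fin (2 * k + 1)) (c : (addEdge (HkP3 k) u v).Walk w w), c.IsHamiltonianCycle := by
  obtain ⟨m, hm⟩ : ∃ m : Fin (2 * k + 1), (m : ℕ) = 1 := ⟨⟨1, by omega⟩, rfl⟩
  obtain ⟨x, hx⟩ : ∃ x : Fin (2 * k + 1), (x : ℕ) = 2 - u := ⟨⟨2 - u, by omega⟩, rfl⟩
  obtain ⟨p, hp, hlen, hsup⟩ := HkP3_exists_path_through_BC hk (x := x) (by omega) hv
  have hum : (HkP3 k).Adj u m := by rw [HkP3_adj_iff]; omega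
  have hmx : (HkP3 k).Adj m x := by rw [HkP3_adj_iff]; omega
  have huv : u ≠ v := by rintro rfl; simp only [inC_HkP3] at hv; omega
  have hq : (Walk.cons hum (.cons hmx p)).IsPath := by
    rw [Walk.cons_isPath_iff, Walk.cons_isPath_iff, Walk.support_cons, List.mem_cons, not_or]
    refine ⟨⟨hp, fun h => ?_⟩, hum.ne, fun h => ?_⟩
    · have := hsup m h
      simp only [Fin.ext_iff] at this; omega
    · have := hsup u h
      simp only [Fin.ext_iff] at this; omega
  refine exists_isHamiltonianCycle_of_isPath _ (hq.mapLe (le_addEdge _ u v))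
    (addEdge_adj_self _ huv).symm ?_ ?_
  · simp only [Walk.length_mapLe, Walk.length_cons, Fintype.card_fin]; omega
  · simp only [Fintype.card_fin]; omega

/-- `H_k(P_3) + uv` is Hamiltonian for distinct `u, v ∈ C`. -/
theorem HkP3_add_edge_C_C {k : ℕ} (hk : 3 ≤ k) {u v : Fin (2 * k + 1)} (huv : u ≠ v)
    (hu : inC_HkP3 k u) (hv : inC_HkP3 k v) :
    ∃ (w : Fin (2 * k + 1)) (c : (addEdge (HkP3 k) u v).Walk w w), c.IsHamiltonianCycle := by
  obtain ⟨S, hScard, hS⟩ := HkP3_exists_partB k (by omega)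
  obtain ⟨T, hTcard, hT⟩ := HkP3_exists_partC k (by omega)
  obtain ⟨b, hb⟩ : S.Nonempty := Finset.card_pos.mp (by omega)
  obtain ⟨a₁, h₁⟩ : ∃ x : Fin (2 * k + 1), (x : ℕ) = 0 := ⟨⟨0, by omega⟩, rfl⟩
  obtain ⟨a₂, h₂⟩ : ∃ x : Fin (2 * k + 1), (x : ℕ) = 1 := ⟨⟨1, by omega⟩, rfl⟩
  obtain ⟨a₃, h₃⟩ : ∃ x : Fin (2 * k + 1), (x : ℕ) = 2 := ⟨⟨2, by omega⟩, rfl⟩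
  have hcardS := Finset.card_erase_of_mem hb
  have hcardT := Finset.card_erase_of_mem ((hT v).mpr hv)
  have hcardT' := Finset.card_erase_of_mem (Finset.mem_erase.mpr ⟨huv, (hT u).mpr hu⟩)
  have hbB := (hS b).mp hb
  have memB (w) (h : w ∈ S.erase b) : w ≠ b ∧ inB_HkP3 k w := by
    rwa [Finset.mem_erase, hS] at h
  have memC (w) (h : w ∈ (T.erase v).erase u) : w ≠ u ∧ inC_HkP3 k w := by
    rw [Finset.mem_erase, Finset.mem_erase, hT] at h
    exact ⟨h.1, h.2.2⟩
  simp only [inC_HkP3, inB_HkP3] at hu hv hbB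
  obtain ⟨p, hp, hlen, hsup⟩ := HkP3_exists_path (x := a₁) (y := v) (S := S.erase b)
    (T := (T.erase v).erase u) (by simp only [inB_HkP3]; omega)
    (by simp only [inB_HkP3]; omega) (by rintro rfl; omega)
    (fun h => by have := (memC _ h).2; simp only [inC_HkP3] at this; omega) (by simp)
    (fun w hw => (memB w hw).2) (fun w hw => (memC w hw).2) (by omega)
  have hsup' (w) (h : w ∈ p.support) :
      w = a₁ ∨ w = v ∨ (w ≠ b ∧ inB_HkP3 k w) ∨ (w ≠ u ∧ inC_HkP3 k w) := by
    have := hsup w h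
    have := memB w
    have := memC w
    tauto
  simp only [Fin.ext_iff, ne_eq, inB_HkP3, inC_HkP3] at hsup'
  have huv' : (u : ℕ) ≠ v := fun h => huv (Fin.ext h)
  have hub : (HkP3 k).Adj u b := by rw [HkP3_adj_iff]; simp only [inB_HkP3]; omega
  have hb3 : (HkP3 k).Adj b a₃ := by rw [HkP3_adj_iff]; simp only [inB_HkP3]; omega
  have h32 : (HkP3 k).Adj a₃ a₂ := by rw [HkP3_adj_iff]; omega
  have h21 : (HkP3 k).Adj a₂ a₁ := by rw [HkP3_adj_iff]; omega
  have hq : (Walk.cons hub (.cons hb3 (.cons h32 (.cons h21 p)))).IsPath := by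
    simp only [Walk.cons_isPath_iff, Walk.support_cons, List.mem_cons, not_or, Fin.ext_iff]
    refine ⟨⟨⟨⟨hp, fun h => ?_⟩, by omega, fun h => ?_⟩, by omega, by omega, fun h => ?_⟩,
      by omega, by omega, by omega, fun h => ?_⟩ <;>
    · have := hsup' _ h
      omega
  refine exists_isHamiltonianCycle_of_isPath _ (hq.mapLe (le_addEdge _ u v))
    (addEdge_adj_self _ huv).symm ?_ ?_
  · simp only [Walk.length_mapLe, Walk.length_cons, Fintype.card_fin]; omega
  · simp only [Fintype.card_fin]; omega

/-- Let `k ≥ 5`. For any two distinct nonadjacent vertices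
`u, v ∈ {a_1, a_3} ∪ C` of `H_k(P_3)` with `{u,v} ≠ {a_1,a_3}` (here `a_1 = 0`,
`a_2 = 1`, `a_3 = 2`), the graph `H_k(P_3) + uv` has a Hamilton cycle. Moreover for
every `z ∈ C` there is a path on `2k` vertices from `a_2` to `z`. -/
theorem HkP3_add_edge_hamiltonian (k : ℕ) (hk : 5 ≤ k) :
    (∀ u v : Fin (2 * k + 1), u ≠ v → ¬ (HkP3 k).Adj u v →
      ((u : ℕ) = 0 ∨ (u : ℕ) = 2 ∨ inC_HkP3 k (u : ℕ)) →
      ((v : ℕ) = 0 ∨ (v : ℕ) = 2 ∨ inC_HkP3 k (v : ℕ)) →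
      ¬ (((u : ℕ) = 0 ∧ (v : ℕ) = 2) ∨ ((u : ℕ) = 2 ∧ (v : ℕ) = 0)) →
      ∃ (w : Fin (2 * k + 1)) (c : (addEdge (HkP3 k) u v).Walk w w),
        c.IsHamiltonianCycle) ∧
    (∀ z : Fin (2 * k + 1), inC_HkP3 k (z : ℕ) →
      ∃ p : (HkP3 k).Walk (1 : Fin (2 * k + 1)) z,
        p.IsPath ∧ p.support.length = 2 * k) := by
  refine ⟨fun u v huv _ hu hv hne => ?_, fun z hz => ?_⟩
  · have huv' : (u : ℕ) ≠ v := fun h => huv (Fin.ext h)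
    by_cases huC : inC_HkP3 k u
    · by_cases hvC : inC_HkP3 k v
      · exact HkP3_add_edge_C_C (by omega) huv huC hvC
      · rw [addEdge_comm]
        exact HkP3_add_edge_end_C (by omega) (by tauto) huC
    · have hvC : inC_HkP3 k v := by
        by_contra hvC
        simp only [huC, hvC, or_false] at hu hv
        omega
      exact HkP3_add_edge_end_C (by omega) (by tauto) hvC
  · obtain ⟨x, hx⟩ : ∃ x : Fin (2 * k + 1), (x : ℕ) = 0 := ⟨⟨0, by omega⟩, rfl⟩
    obtain ⟨p, hp, hlen, hsup⟩ := HkP3_exists_path_through_BC (by omega) (x := x) (by omega) hz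
    have h1 : ((1 : Fin (2 * k + 1)) : ℕ) = 1 := by
      rw [Fin.val_one']
      exact Nat.mod_eq_of_lt (by omega)
    have hadj : (HkP3 k).Adj 1 x := by rw [HkP3_adj_iff]; omega
    refine ⟨.cons hadj p, ?_, ?_⟩
    · rw [Walk.cons_isPath_iff]
      refine ⟨hp, fun h => ?_⟩
      have := hsup 1 h
      simp only [Fin.ext_iff] at this
      omega
    · rw [Walk.length_support, Walk.length_cons]
      omega
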